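/- arXiv:1301.4972 — 2 statements merged into one kernel-verified Lean document; each statement's English description precedes it below -/
import Mathlib

section
/- Let f : A* → A* be a morphism generating a pure morphic word x = f^ω(a). If t is an infinite word in the shift orbit closure of x satisfying f(t) = t, then t is a morphic word. -/
/-- The prefix of length `n` of an infinite word. -/
def wordPrefix {A : Type*} (x : ℕ → A) (n : ℕ) : List A :=
  List.ofFn (fun i : Fin n => x i)

/-- A finite word is a prefix of an infinite word. -/
def IsPrefixOfWord {A : Type*} (w : List A) (x : ℕ → A) : Prop :=
  wordPrefix x w.length = w

/-- A finite word is a factor of an infinite word. -/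
def IsFactor {A : Type*} (w : List A) (x : ℕ → A) : Prop :=
  ∃ i, w = List.ofFn (fun j : Fin w.length => x (i + j))

/-- `y` belongs to the shift orbit closure of `x`. -/
def InOrbitClosure {A : Type*} (y x : ℕ → A) : Prop :=
  ∀ w, IsFactor w y → IsFactor w x

/-- A morphism `A* → B*` applied to a finite word. -/
def applyMorphism {A B : Type*} (f : A → List B) (w : List A) : List B :=
  w.flatMap f

/-- The `n`-th iterate of a morphism applied to a finite word. -/
def applyIter {A : Type*} (f : A → List A) (n : ℕ) (w : List A) : List A :=
  (applyMorphism f)^[n] w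

/-- `y = f(x)` for infinite words: every image of a prefix of `x` is a prefix of `y`. -/
def IsWordImage {A B : Type*} (f : A → List B) (x : ℕ → A) (y : ℕ → B) : Prop :=
  ∀ n, IsPrefixOfWord (applyMorphism f (wordPrefix x n)) y

/-- Prepend a finite word to an infinite word. -/
def prepend {A : Type*} (w : List A) (x : ℕ → A) : ℕ → A :=
  fun n => if h : n < w.length then w.get ⟨n, h⟩ else x (n - w.length)

/-- Strict lexicographic order on infinite words induced by the order `r` on letters. -/
def LexLt {A : Type*} (r : A → A → Prop) (x y : ℕ → A) : Prop :=
  ∃ n, (∀ i, i < n → x i = y i) ∧ r (x n) (y n)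

def LexLe {A : Type*} (r : A → A → Prop) (x y : ℕ → A) : Prop :=
  LexLt r x y ∨ x = y

/-- `l` is the lexicographically least word (w.r.t. `r`) in the shift orbit closure
of `x` beginning with the letter `a`. -/
def IsLeastWord {A : Type*} (r : A → A → Prop) (x : ℕ → A) (a : A) (l : ℕ → A) : Prop :=
  InOrbitClosure l x ∧ l 0 = a ∧ ∀ y, InOrbitClosure y x → y 0 = a → LexLe r l y

/-- `f` is prolongable on `a` (and generates an infinite word from `a`). -/
def IsGenerating {A : Type*} (f : A → List A) (a : A) : Prop :=
  ∃ s, f a = a :: s ∧ s ≠ [] ∧ ∀ n, applyIter f n s ≠ []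

/-- `x` is the pure morphic word `f^ω(a)`. -/
def IsPureMorphic {A : Type*} (f : A → List A) (a : A) (x : ℕ → A) : Prop :=
  x 0 = a ∧ IsGenerating f a ∧ IsWordImage f x x

/-- `x` is a morphic word: the image under a coding of a pure morphic word. -/
def IsMorphic {B : Type*} (x : ℕ → B) : Prop :=
  ∃ (k : ℕ) (g : Fin k → List (Fin k)) (b : Fin k) (c : Fin k → B) (t : ℕ → Fin k),
    IsPureMorphic g b t ∧ x = c ∘ t

/-- `f ∈ M_x`: each letter `b` has a nonempty "marker" word `p b` such that `f(y)`
begins with `p b` whenever `y ∈ S_x` begins with `b`, and the markers of distinct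
letters are prefix-incomparable. -/
def MemM {A B : Type*} (f : A → List B) (x : ℕ → A) : Prop :=
  ∃ p : A → List B, (∀ b, p b ≠ []) ∧
    (∀ (b : A) (y : ℕ → A), InOrbitClosure y x → y 0 = b →
      ∃ n, p b <+: applyMorphism f (wordPrefix y n)) ∧
    (∀ a b : A, a ≠ b → ¬ p a <+: p b ∧ ¬ p b <+: p a)

/-- Every factor occurs infinitely often. -/
def Recurrent {A : Type*} (x : ℕ → A) : Prop :=
  ∀ w, IsFactor w x → ∀ N, ∃ i, N ≤ i ∧ w = List.ofFn (fun j : Fin w.length => x (i + j))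

/-- Ultimately periodic infinite word. -/
def UltimatelyPeriodic {A : Type*} (x : ℕ → A) : Prop :=
  ∃ N p, 0 < p ∧ ∀ n, N ≤ n → x (n + p) = x n

/-- The period-doubling morphism `0 ↦ 01`, `1 ↦ 00`. -/
def pdMorph : Bool → List Bool := fun b => if b then [false, false] else [false, true]

/-- The morphism `0 ↦ 0001`, `1 ↦ 0101`. -/
def gMorph : Bool → List Bool :=
  fun b => if b then [false, true, false, true] else [false, false, false, true]

/-- The Chacon morphism `0 ↦ 0010`, `1 ↦ 1`. -/
def chMorph : Bool → List Bool := fun b => if b then [true] else [false, false, true, false]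

/-- The Rudin–Shapiro morphism `0 ↦ 01`, `1 ↦ 02`, `2 ↦ 31`, `3 ↦ 32`. -/
def rsMorph : Fin 4 → List (Fin 4) := ![[0, 1], [0, 2], [3, 1], [3, 2]]

/-- The Rudin–Shapiro coding `0 ↦ 0`, `1 ↦ 0`, `2 ↦ 1`, `3 ↦ 1`. -/
def rsCoding : Fin 4 → Bool := ![false, false, true, true]

/-- The 2-bit binary representation morphism `0 ↦ 00`, `1 ↦ 01`, `2 ↦ 10`, `3 ↦ 11`. -/
def hMorph : Fin 4 → List Bool := ![[false, false], [false, true], [true, false], [true, true]]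
namespace St4

lemma isPrefix_iff {A : Type*} (w : List A) (x : ℕ → A) :
    IsPrefixOfWord w x ↔ ∀ i (h : i < w.length), w[i] = x i := by
  unfold IsPrefixOfWord wordPrefix
  constructor
  · intro h i hi
    have := congrArg (fun l => l[i]?) h
    simp [hi] at this
    exact this.symm
  · intro h
    apply List.ext_getElem
    · simp
    · intro i h1 h2
      simp [h i h2]

lemma length_wordPrefix {A : Type*} (x : ℕ → A) (n : ℕ) : (wordPrefix x n).length = n := by
  simp [wordPrefix]

lemma getElem_wordPrefix {A : Type*} (x : ℕ → A) (n i : ℕ) (h : i < (wordPrefix x n).length) :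
    (wordPrefix x n)[i] = x i := by
  simp [wordPrefix]

lemma isPrefix_mono {A : Type*} {w v : List A} {x : ℕ → A} (h : w <+: v)
    (hv : IsPrefixOfWord v x) : IsPrefixOfWord w x := by
  rw [isPrefix_iff] at *
  intro i hi
  rw [h.getElem hi]
  exact hv i _

lemma prefix_of_le {A : Type*} {w v : List A} {x : ℕ → A} (hw : IsPrefixOfWord w x)
    (hv : IsPrefixOfWord v x) (h : w.length ≤ v.length) : w <+: v := by
  rw [isPrefix_iff] at *
  rw [List.prefix_iff_eq_take]
  apply List.ext_getElem
  · simp [h]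
  · intro i h1 h2
    simp [hw i h1]
    exact (hv i _).symm

lemma wordPrefix_isPrefix {A : Type*} (x : ℕ → A) (n : ℕ) : IsPrefixOfWord (wordPrefix x n) x := by
  rw [isPrefix_iff]
  intro i h
  exact getElem_wordPrefix ..

lemma applyMorphism_append {A B : Type*} (f : A → List B) (u v : List A) :
    applyMorphism f (u ++ v) = applyMorphism f u ++ applyMorphism f v := by
  simp [applyMorphism]

lemma applyIter_zero {A : Type*} (f : A → List A) (w : List A) : applyIter f 0 w = w := rfl

lemma applyIter_succ {A : Type*} (f : A → List A) (n : ℕ) (w : List A) :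
    applyIter f (n+1) w = applyIter f n (applyMorphism f w) := rfl

lemma applyIter_succ' {A : Type*} (f : A → List A) (n : ℕ) (w : List A) :
    applyIter f (n+1) w = applyMorphism f (applyIter f n w) := by
  simp [applyIter, Function.iterate_succ_apply']

lemma applyIter_add {A : Type*} (f : A → List A) (m n : ℕ) (w : List A) :
    applyIter f (m+n) w = applyIter f m (applyIter f n w) := by
  simp [applyIter, Function.iterate_add_apply]

lemma applyIter_append {A : Type*} (f : A → List A) (n : ℕ) (u v : List A) :
    applyIter f n (u ++ v) = applyIter f n u ++ applyIter f n v := by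
  induction n generalizing u v with
  | zero => rfl
  | succ n ih => simp [applyIter_succ, applyMorphism_append, ih]

lemma applyIter_nil {A : Type*} (f : A → List A) (n : ℕ) : applyIter f n [] = [] := by
  induction n with
  | zero => rfl
  | succ n ih => rw [applyIter_succ]; exact ih

lemma applyIter_cons {A : Type*} (f : A → List A) (n : ℕ) (e : A) (v : List A) :
    applyIter f n (e :: v) = applyIter f n [e] ++ applyIter f n v := by
  rw [← applyIter_append]; rfl

lemma applyMorphism_prefix {A B : Type*} (f : A → List B) {u v : List A} (h : u <+: v) :
    applyMorphism f u <+: applyMorphism f v := by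
  obtain ⟨r, rfl⟩ := h
  simp [applyMorphism_append]

lemma applyMorphism_singleton {A B : Type*} (f : A → List B) (e : A) :
    applyMorphism f [e] = f e := by simp [applyMorphism]

lemma image_prefix {A B : Type*} {f : A → List B} {x : ℕ → A} {y : ℕ → B} (h : IsWordImage f x y)
    {w : List A} (hw : IsPrefixOfWord w x) : IsPrefixOfWord (applyMorphism f w) y := by
  have := h w.length
  rwa [hw] at this

/-- transport to `Fin k` -/
lemma isMorphic_of {A B : Type*} [Fintype B] (g : B → List B) (b : B) (c : B → A) (s : ℕ → B)
    (h : IsPureMorphic g b s) : IsMorphic (c ∘ s) := by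
  classical
  let e := Fintype.equivFin B
  let g' : Fin (Fintype.card B) → List (Fin (Fintype.card B)) := fun i => (g (e.symm i)).map e
  have hm : ∀ w : List B, applyMorphism g' (w.map e) = (applyMorphism g w).map e := by
    intro w
    simp [applyMorphism, g', List.flatMap_map, List.map_flatMap]
  have hi : ∀ n (w : List B), applyIter g' n (w.map e) = (applyIter g n w).map e := by
    intro n
    induction n with
    | zero => intro w; rfl
    | succ n ih => intro w; rw [applyIter_succ, hm, ih]; rfl
  obtain ⟨h0, ⟨u, hu, hu0, hu1⟩, h2⟩ := h
  refine ⟨Fintype.card B, g', e b, c ∘ e.symm, e ∘ s, ⟨by simp [h0], ⟨u.map e, by simp [g', hu],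
    by simpa using hu0, ?_⟩, ?_⟩, ?_⟩
  · intro n
    rw [hi]
    simpa using hu1 n
  · intro n
    have h3 := h2 n
    have : wordPrefix (e ∘ s) n = (wordPrefix s n).map e := by
      apply List.ext_getElem <;> simp [wordPrefix]
    rw [this, hm]
    rw [isPrefix_iff] at *
    intro i hi
    simp at hi ⊢
    exact h3 i hi
  · ext n
    simp

lemma applyMorphism_congr_nil {A B : Type*} (f : A → List B) (w : List A)
    (h : ∀ e ∈ w, f e = []) : applyMorphism f w = [] := by
  simpa [applyMorphism] using h

lemma morphic_of_tail {A : Type*} [Fintype A] (f : A → List A) (m : ℕ) (t : ℕ → A) (hm : 0 < m)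
    (v : List A) (hv : ∀ n, applyIter f n v ≠ [])
    (hy : ∀ n, IsPrefixOfWord (v ++ applyMorphism f (wordPrefix (fun i => t (m + i)) n))
      (fun i => t (m + i))) : IsMorphic t := by
  classical
  let g : A ⊕ Fin m → List (A ⊕ Fin m) := fun l => match l with
    | .inl e => (f e).map .inl
    | .inr i => if i.1 = 0 then (List.ofFn fun i : Fin m => (Sum.inr i : A ⊕ Fin m)) ++ v.map .inl
        else []
  let s : ℕ → A ⊕ Fin m := fun n => if h : n < m then .inr ⟨n, h⟩ else .inl (t n)
  let c : A ⊕ Fin m → A := Sum.elim id (fun i => t i)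
  have hc : t = c ∘ s := by
    ext n
    by_cases h : n < m <;> simp [c, s, h]
  rw [hc]
  have hgl : ∀ w : List A, applyMorphism g (w.map .inl) = (applyMorphism f w).map .inl := by
    intro w
    simp [applyMorphism, g, List.flatMap_map, List.map_flatMap]
  have hgi : ∀ n (w : List A), applyIter g n (w.map .inl) = (applyIter f n w).map .inl := by
    intro n
    induction n with
    | zero => intro w; rfl
    | succ n ih => intro w; rw [applyIter_succ, hgl, ih]; rfl
  obtain ⟨k, rfl⟩ : ∃ k, m = k + 1 := ⟨m - 1, by omega⟩
  let r : List (A ⊕ Fin (k+1)) := List.ofFn (fun i : Fin k => (Sum.inr i.succ : A ⊕ Fin (k+1)))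
  have hr : applyMorphism g r = [] := by
    apply applyMorphism_congr_nil
    intro e he
    simp only [r, List.mem_ofFn] at he
    obtain ⟨i, rfl⟩ := he
    simp [g]
  have hri : ∀ n, applyIter g (n+1) r = [] := by
    intro n
    rw [applyIter_succ, hr, applyIter_nil]
  have hg0 : g (.inr 0) = .inr 0 :: (r ++ v.map .inl) := by
    simp [g, r, List.ofFn_succ]
  refine isMorphic_of g (.inr 0) c s ⟨by simp [s], ⟨_, hg0, ?_, ?_⟩, ?_⟩
  · have := hv 0
    simp [applyIter_zero] at this
    simp [this]
  · intro n
    rw [applyIter_append, hgi]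
    have := hv n
    simp [this]
  · have key : ∀ n, IsPrefixOfWord (applyMorphism g (wordPrefix s (k + 1 + n))) s := by
      intro n
      have h1 : wordPrefix s (k+1+n) = [.inr 0] ++ r ++
          (wordPrefix (fun i => t (k+1+i)) n).map .inl := by
        apply List.ext_getElem
        · simp [wordPrefix, r]; omega
        · intro i h1 h2
          rw [getElem_wordPrefix]
          by_cases hi : i < k + 1
          · rw [List.getElem_append_left (by simp [r]; omega)]
            cases i with
            | zero => simp [s]
            | succ i => simp [s, r, show i < k by omega]
          · rw [List.getElem_append_right (by simp [r]; omega)]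
            simp only [s, dif_neg hi, List.getElem_map, getElem_wordPrefix]
            congr 2
            simp [r]; omega
      have h2 : applyMorphism g (wordPrefix s (k+1+n)) = (.inr 0 :: r) ++
          (v ++ applyMorphism f (wordPrefix (fun i => t (k+1+i)) n)).map .inl := by
        rw [h1, applyMorphism_append, applyMorphism_append, hr, hgl, applyMorphism_singleton, hg0]
        simp
      rw [h2]
      have h3 := hy n
      rw [isPrefix_iff] at *
      intro i hi
      by_cases hik : i < k + 1
      · rw [List.getElem_append_left (by simp [r]; omega)]
        cases i with
        | zero => simp [s]
        | succ i => simp [s, r]; omega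
      · rw [List.getElem_append_right (by simp [r]; omega)]
        rw [List.getElem_map]
        simp only [List.length_append, List.length_map, List.length_cons] at hi
        have hl : r.length = k := by simp [r]
        have := h3 (i - (k+1)) (by simp only [List.length_append]; omega)
        simp only [List.length_cons, hl]
        rw [this]
        simp only [s, dif_neg hik]
        congr 2; omega
    intro n
    refine isPrefix_mono (applyMorphism_prefix g ?_) (key n)
    exact prefix_of_le (wordPrefix_isPrefix _ _) (wordPrefix_isPrefix _ _)
      (by simp [length_wordPrefix])

lemma morphic_of_ult {A : Type*} [Fintype A] (t : ℕ → A) (N p : ℕ) (hp : 0 < p)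
    (h : ∀ n, N ≤ n → t (n + p) = t n) : IsMorphic t := by
  have hid : ∀ w : List A, applyMorphism (fun e => [e]) w = w := by
    intro w; simp [applyMorphism]
  have hiter : ∀ n (w : List A), applyIter (fun e => [e]) n w = w := by
    intro n w
    induction n with
    | zero => rfl
    | succ n ih => rw [applyIter_succ, hid, ih]
  refine morphic_of_tail (fun e => [e]) (N+1) t (by omega) (wordPrefix (fun i => t (N+1+i)) p) ?_ ?_
  · intro n
    rw [hiter]
    intro h0
    have := congrArg List.length h0
    simp [length_wordPrefix] at this
    omega
  · intro n
    rw [hid, isPrefix_iff]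
    intro i hi
    by_cases hip : i < p
    · rw [List.getElem_append_left (by simpa [length_wordPrefix] using hip), getElem_wordPrefix]
    · rw [List.getElem_append_right (by simp [length_wordPrefix]; omega), getElem_wordPrefix]
      rw [length_wordPrefix, ← h _ (by omega)]
      congr 1; omega

end St4
namespace St4

/-- number of `p`-defects of a finite word -/
noncomputable def Dset {A : Type*} (p : ℕ) (w : List A) : Finset ℕ := by
  classical
  exact (Finset.range w.length).filter (fun i => i + p < w.length ∧ w[i]? ≠ w[i+p]?)

lemma mem_Dset {A : Type*} (p : ℕ) (w : List A) (i : ℕ) :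
    i ∈ Dset p w ↔ i + p < w.length ∧ w[i]? ≠ w[i+p]? := by
  classical
  simp only [Dset, Finset.mem_filter, Finset.mem_range]
  constructor
  · exact fun h => h.2
  · exact fun h => ⟨by omega, h⟩

noncomputable def D {A : Type*} (p : ℕ) (w : List A) : ℕ := (Dset p w).card

lemma D_le_length {A : Type*} (p : ℕ) (w : List A) : D p w ≤ w.length := by
  have : Dset p w ⊆ Finset.range w.length := by
    intro i hi
    rw [mem_Dset] at hi
    simp; omega
  simpa [D] using Finset.card_le_card this

lemma D_append {A : Type*} (p : ℕ) (u v : List A) : D p (u ++ v) ≤ D p u + D p v + p := by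
  classical
  have : Dset p (u ++ v) ⊆ Dset p u ∪ (Dset p v).image (· + u.length) ∪
      Finset.Ico (u.length - p) u.length := by
    intro i hi
    rw [mem_Dset] at hi
    simp only [Finset.mem_union, mem_Dset, Finset.mem_image, Finset.mem_Ico]
    obtain ⟨h1, h2⟩ := hi
    rw [List.length_append] at h1
    by_cases ha : i + p < u.length
    · left; left
      refine ⟨ha, ?_⟩
      rwa [List.getElem?_append_left (by omega), List.getElem?_append_left (by omega)] at h2
    · by_cases hb : i < u.length
      · right; omega
      · left; right
        refine ⟨i - u.length, ⟨by omega, ?_⟩, by omega⟩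
        rw [List.getElem?_append_right (by omega), List.getElem?_append_right (by omega)] at h2
        rwa [show i + p - u.length = i - u.length + p by omega] at h2
  have h2 := Finset.card_le_card this
  refine h2.trans ((Finset.card_union_le _ _).trans ?_)
  have h3 := Finset.card_union_le (Dset p u) ((Dset p v).image (· + u.length))
  have h4 : ((Dset p v).image (· + u.length)).card ≤ (Dset p v).card := Finset.card_image_le
  simp only [Nat.card_Ico]
  unfold D
  omega

lemma D_infix {A : Type*} (p : ℕ) {u v : List A} (h : u <:+: v) : D p u ≤ D p v := by
  obtain ⟨a, b, rfl⟩ := h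
  refine Finset.card_le_card_of_injOn (· + a.length) ?_ (fun i _ j _ h => by simpa using h)
  intro i hi
  have hi : i ∈ Dset p u := hi
  show i + a.length ∈ Dset p (a ++ u ++ b)
  rw [mem_Dset] at *
  refine ⟨by simp; omega, ?_⟩
  have key : ∀ j, j < u.length → (a ++ u ++ b)[j + a.length]? = u[j]? := by
    intro j hj
    rw [List.append_assoc, List.getElem?_append_right (by omega), Nat.add_sub_cancel,
      List.getElem?_append_left hj]
  rw [show i + a.length + p = i + p + a.length by omega, key _ hi.1, key _ (by omega)]
  exact hi.2

lemma D_reverse_le {A : Type*} (p : ℕ) (w : List A) : D p w ≤ D p w.reverse := by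
  refine Finset.card_le_card_of_injOn (fun i => w.length - 1 - p - i) ?_ ?_
  · intro i hi
    have hi : i ∈ Dset p w := hi
    show w.length - 1 - p - i ∈ Dset p w.reverse
    rw [mem_Dset] at *
    obtain ⟨h1, h2⟩ := hi
    refine ⟨by simp; omega, ?_⟩
    rw [List.getElem?_reverse (by omega), List.getElem?_reverse (by omega)]
    rw [show w.length - 1 - (w.length - 1 - p - i) = i + p by omega,
      show w.length - 1 - (w.length - 1 - p - i + p) = i by omega]
    exact h2.symm
  · intro i hi j hj h
    have hi : i ∈ Dset p w := hi
    have hj : j ∈ Dset p w := hj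
    rw [mem_Dset] at hi hj
    simp at h
    omega

lemma D_power {A : Type*} (p : ℕ) (V : List A) (j : ℕ) (h : V = [] ∨ V.length ∣ p) :
    D p (List.replicate j V).flatten = 0 := by
  have key : ∀ q i : ℕ, i + q * V.length < ((List.replicate j V).flatten).length →
      ((List.replicate j V).flatten)[i + q * V.length]? = ((List.replicate j V).flatten)[i]? := by
    intro q i hi
    have h0 : q ≤ j := by
      by_contra hq
      simp at hi
      have : j * V.length ≤ q * V.length := Nat.mul_le_mul_right _ (by omega)
      omega
    obtain ⟨r, rfl⟩ := Nat.exists_eq_add_of_le h0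
    simp at hi
    have h1 : (List.replicate (q+r) V).flatten =
      (List.replicate q V).flatten ++ (List.replicate r V).flatten := by
      rw [List.replicate_add, List.flatten_append]
    have h2 : (List.replicate (q+r) V).flatten =
      (List.replicate r V).flatten ++ (List.replicate q V).flatten := by
      rw [add_comm, List.replicate_add, List.flatten_append]
    have e1 : (List.replicate (q+r) V).flatten[i + q * V.length]? =
        (List.replicate r V).flatten[i]? := by
      rw [h1, List.getElem?_append_right (by simp)]
      congr 1; simp
    have e2 : (List.replicate (q+r) V).flatten[i]? =
        (List.replicate r V).flatten[i]? := by
      rw [h2, List.getElem?_append_left]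
      simp
      rw [Nat.add_mul] at hi
      omega
    rw [e1, e2]
  unfold D
  rw [Finset.card_eq_zero, Finset.eq_empty_iff_forall_notMem]
  intro i hi
  rw [mem_Dset] at hi
  rcases h with rfl | ⟨q, rfl⟩
  · simp at hi
  · have := key q i (by rw [mul_comm]; exact hi.1)
    rw [mul_comm] at this
    exact hi.2 this.symm

def Bd {A : Type*} (f : A → List A) (e : A) : Prop := ∃ K, ∀ n, (applyIter f n [e]).length ≤ K

lemma bd_word {A : Type*} (f : A → List A) (w : List A) (h : ∀ e ∈ w, Bd f e) :
    ∃ K, ∀ n, (applyIter f n w).length ≤ K := by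
  induction w with
  | nil => exact ⟨0, fun n => by simp [applyIter_nil]⟩
  | cons e w ih =>
    obtain ⟨K, hK⟩ := ih (fun e he => h e (by simp [he]))
    obtain ⟨K', hK'⟩ := h e (by simp)
    refine ⟨K' + K, fun n => ?_⟩
    rw [applyIter_cons, List.length_append]
    exact Nat.add_le_add (hK' n) (hK n)

lemma bd_word_conv {A : Type*} (f : A → List A) (w : List A) 
    (h : ∃ K, ∀ n, (applyIter f n w).length ≤ K) : ∀ e ∈ w, Bd f e := by
  intro e he
  obtain ⟨u, v, rfl⟩ := List.append_of_mem he
  obtain ⟨K, hK⟩ := h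
  refine ⟨K, fun n => ?_⟩
  have := hK n
  rw [applyIter_append, applyIter_cons] at this
  simp at this
  omega

lemma bd_image {A : Type*} (f : A → List A) (e : A) : Bd f e ↔ ∀ d ∈ f e, Bd f d := by
  constructor
  · rintro ⟨K, hK⟩
    refine bd_word_conv f _ ⟨K, fun n => ?_⟩
    have := hK (n+1)
    rwa [applyIter_succ, applyMorphism_singleton] at this
  · intro h
    obtain ⟨K, hK⟩ := bd_word f _ h
    refine ⟨K + 1, fun n => ?_⟩
    cases n with
    | zero => simp [applyIter_zero]
    | succ n =>
      rw [applyIter_succ, applyMorphism_singleton]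
      have := hK n
      omega

lemma bd_morph {A : Type*} (f : A → List A) (w : List A) (h : ∀ e ∈ w, Bd f e) :
    ∀ e ∈ applyMorphism f w, Bd f e := by
  intro e he
  simp only [applyMorphism, List.mem_flatMap] at he
  obtain ⟨d, hd, he⟩ := he
  exact (bd_image f d).1 (h d hd) e he

lemma first_split {A : Type*} (P : A → Prop) (w : List A) (h : ¬ ∀ e ∈ w, P e) :
    ∃ l d r, w = l ++ d :: r ∧ (∀ e ∈ l, P e) ∧ ¬ P d := by
  induction w with
  | nil => simp at h
  | cons e w ih =>
    by_cases he : P e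
    · obtain ⟨l, d, r, rfl, h1, h2⟩ := ih (by
        intro h'
        exact h (by simpa [he] using h'))
      exact ⟨e :: l, d, r, rfl, by simpa [he] using h1, h2⟩
    · exact ⟨[], e, w, rfl, by simp, he⟩

lemma prefix_split {A : Type*} {q X Y : List A} (h : q <+: X ++ Y) :
    q <+: X ∨ ∃ q', q = X ++ q' ∧ q' <+: Y := by
  rcases List.prefix_or_prefix_of_prefix h (List.prefix_append X Y) with h1 | ⟨q', rfl⟩
  · exact .inl h1
  · exact .inr ⟨q', rfl, (List.prefix_append_right_inj _).1 h⟩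

lemma infix_split {A : Type*} {q X Y : List A} (h : q <:+: X ++ Y) :
    q <:+: X ∨ q <:+: Y ∨ ∃ s r, q = s ++ r ∧ s <:+ X ∧ r <+: Y := by
  obtain ⟨u, v, h⟩ := h
  have h1 : u ++ q <+: X ++ Y := ⟨v, h⟩
  rcases prefix_split h1 with h2 | ⟨q', h2, h3⟩
  · left
    exact (List.suffix_append u q).isInfix.trans h2.isInfix
  · right
    have h4 : q <:+ X ++ q' := h2 ▸ List.suffix_append u q
    rcases List.append_eq_append_iff.1 h2 with ⟨s, h5, h6⟩ | ⟨s, h5, h6⟩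
    · right
      exact ⟨s, q', h6, ⟨u, h5.symm⟩, h3⟩
    · left
      exact (show q <:+ q' from ⟨s, h6.symm⟩).isInfix.trans h3.isInfix

/-- abstract prefix bound for idempotent morphisms -/
lemma prefix_bound_idem {A : Type*} [Fintype A] (F : A → List A) (B : A → Prop)
    (hB : ∀ e, B e → applyMorphism F (F e) = F e)
    (L : A → A) (hL : ∀ c, ¬ B c → L (L c) = L c)
    (hF : ∀ c, ¬ B c → ∃ l r, F c = l ++ L c :: r ∧ (∀ e ∈ l, B e) ∧ ¬ B (L c)) :
    ∃ p0 > 0, ∀ p, p0 ∣ p → ∃ C, ∀ c n q, q <+: applyIter F n [c] → (∀ e ∈ q, B e) →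
      D p q ≤ C := by
  classical
  have hBw : ∀ w : List A, (∀ e ∈ w, B e) →
      applyMorphism F (applyMorphism F w) = applyMorphism F w := by
    intro w hw
    induction w with
    | nil => rfl
    | cons e w ih =>
      have : applyMorphism F (e :: w) = F e ++ applyMorphism F w := by simp [applyMorphism]
      rw [this, applyMorphism_append, hB e (hw e (by simp)), ih (fun e he => hw e (by simp [he]))]
  have hBi : ∀ w : List A, (∀ e ∈ w, B e) → ∀ n, applyIter F (n+1) w = applyMorphism F w := by
    intro w hw n
    induction n with
    | zero => rfl
    | succ n ih => rw [applyIter_succ', ih, hBw w hw]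
  have hlen : ∀ w : List A, (∀ e ∈ w, B e) → ∀ n,
      (applyIter F n w).length ≤ w.length + (applyMorphism F w).length := by
    intro w hw n
    cases n with
    | zero => simp [applyIter_zero]
    | succ n => rw [hBi w hw]; omega
  have hnB : ∀ n c, ¬ B c → ∃ d ∈ applyIter F n [c], ¬ B d := by
    intro n
    induction n with
    | zero => intro c hc; exact ⟨c, by simp [applyIter_zero], hc⟩
    | succ n ih =>
      intro c hc
      obtain ⟨l, r, h1, h2, h3⟩ := hF c hc
      obtain ⟨d, hd, hd'⟩ := ih _ h3
      refine ⟨d, ?_, hd'⟩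
      rw [applyIter_succ, applyMorphism_singleton, h1, applyIter_append, applyIter_cons]
      simp [hd]
  -- splitting of prefixes
  have hsplit : ∀ n c l r q, F c = l ++ L c :: r → ¬ B (L c) → (∀ e ∈ q, B e) →
      q <+: applyIter F (n+1) [c] →
      q <+: applyIter F n l ∨ ∃ q', q = applyIter F n l ++ q' ∧ q' <+: applyIter F n [L c] := by
    intro n c l r q h1 h3 hq hp
    rw [applyIter_succ, applyMorphism_singleton, h1, applyIter_append, applyIter_cons] at hp
    rcases prefix_split hp with h | ⟨q', rfl, h⟩
    · exact .inl h
    · right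
      refine ⟨q', rfl, ?_⟩
      rcases prefix_split h with h | ⟨q'', rfl, h⟩
      · exact h
      · obtain ⟨d, hd, hd'⟩ := hnB n _ h3
        exact absurd (hq d (by simp [hd])) hd'
  choose! l r hFc hlB hnL using hF
  let V : A → List A := fun d => applyMorphism F (l d)
  have hfix : ∀ d, ¬ B d → L d = d → ∀ n q, q <+: applyIter F n [d] → (∀ e ∈ q, B e) →
      ∃ j, q <+: (List.replicate j (V d)).flatten ++ l d := by
    intro d hd hLd n
    induction n with
    | zero =>
      intro q hq hqB
      rw [applyIter_zero] at hq
      cases q with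
      | nil => exact ⟨0, by simp⟩
      | cons e q =>
        rw [List.cons_prefix_cons] at hq
        exact absurd (hqB e (by simp)) (hq.1 ▸ hd)
    | succ n ih =>
      intro q hq hqB
      rcases hsplit n d _ _ q (hFc d hd) (hnL d hd) hqB hq with h | ⟨q', rfl, h⟩
      · cases n with
        | zero => exact ⟨0, by simpa [applyIter_zero] using h⟩
        | succ n =>
          rw [hBi _ (hlB d hd)] at h
          refine ⟨1, ?_⟩
          simp [V]
          exact h.trans (List.prefix_append _ _)
      · rw [hLd] at h
        obtain ⟨j, hj⟩ := ih q' h (fun e he => hqB e (by simp [he]))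
        cases n with
        | zero =>
          cases q' with
          | nil => exact ⟨0, by simp [applyIter_zero]⟩
          | cons e q =>
            rw [applyIter_zero, List.cons_prefix_cons] at h
            exact absurd (hqB e (by simp)) (h.1 ▸ hd)
        | succ n =>
          refine ⟨j+1, ?_⟩
          rw [hBi _ (hlB d hd), List.replicate_succ, List.flatten_cons, List.append_assoc]
          exact (List.prefix_append_right_inj _).2 hj
  refine ⟨∏ d, max 1 (V d).length, Finset.prod_pos (fun d _ => by omega), ?_⟩
  intro p hp
  have hV : ∀ d, V d = [] ∨ (V d).length ∣ p := by
    intro d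
    by_cases h : V d = []
    · exact .inl h
    · right
      have h1 : 0 < (V d).length := List.length_pos_iff.2 h
      have h2 : max 1 (V d).length ∣ p :=
        (Finset.dvd_prod_of_mem (fun d => max 1 (V d).length) (Finset.mem_univ d)).trans hp
      rwa [max_eq_right h1] at h2
  have hfixD : ∀ d, ¬ B d → L d = d → ∀ n q, q <+: applyIter F n [d] → (∀ e ∈ q, B e) →
      D p q ≤ (l d).length + p := by
    intro d hd hLd n q hq hqB
    obtain ⟨j, hj⟩ := hfix d hd hLd n q hq hqB
    refine (D_infix p hj.isInfix).trans ((D_append _ _ _).trans ?_)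
    rw [D_power p _ j (hV d)]
    have := D_le_length p (l d)
    omega
  have hall : ∀ c, ∃ C, ∀ n q, q <+: applyIter F n [c] → (∀ e ∈ q, B e) → D p q ≤ C := by
    intro c
    by_cases hc : B c
    · refine ⟨1 + (F c).length, fun n q hq _ => ?_⟩
      have h1 := hlen [c] (by simpa using hc) n
      rw [applyMorphism_singleton] at h1
      exact (D_le_length p q).trans (hq.length_le.trans h1)
    · refine ⟨(l c).length + (V c).length + ((l (L c)).length + p) + p, fun n q hq hqB => ?_⟩
      cases n with
      | zero =>
        have := (D_le_length p q)
        cases q with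
        | nil => simp at this; omega
        | cons e q =>
          rw [applyIter_zero, List.cons_prefix_cons] at hq
          exact absurd (hqB e (by simp)) (hq.1 ▸ hc)
      | succ n =>
        have hl := hlen _ (hlB c hc) n
        rcases hsplit n c _ _ q (hFc c hc) (hnL c hc) hqB hq with h | ⟨q', rfl, h⟩
        · have := (D_le_length p q).trans h.length_le
          simp only [V]
          omega
        · have h1 := hfixD (L c) (hnL c hc) (hL c hc) n q' h (fun e he => hqB e (by simp [he]))
          have h2 := D_append p (applyIter F n (l c)) q'
          have h3 := D_le_length p (applyIter F n (l c))
          simp only [V]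
          omega
  choose C hC using hall
  refine ⟨∑ c, C c, fun c n q h1 h2 => (hC c n q h1 h2).trans ?_⟩
  exact Finset.single_le_sum (f := C) (fun _ _ => Nat.zero_le _) (Finset.mem_univ c)

end St4
namespace St4

lemma iter_idem {X : Type*} (T : X → X) (x : X) (hfin : (Set.range fun n => T^[n] x).Finite) :
    ∃ M > 0, ∀ k > 0, T^[k * M + k * M] x = T^[k * M] x := by
  have : ∃ i j, i < j ∧ T^[i] x = T^[j] x := by
    by_contra! hcon
    have hinj : Function.Injective (fun n => T^[n] x) := by
      intro i j h
      rcases lt_trichotomy i j with h1 | h1 | h1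
      · exact absurd h (hcon i j h1)
      · exact h1
      · exact absurd h.symm (hcon j i h1)
    exact Set.infinite_range_of_injective hinj hfin
  obtain ⟨i, j, hij, h⟩ := this
  obtain ⟨d, rfl⟩ := Nat.exists_eq_add_of_le hij.le
  have h1 : ∀ n, i ≤ n → T^[n + d] x = T^[n] x := by
    intro n hn
    obtain ⟨m, rfl⟩ := Nat.exists_eq_add_of_le hn
    rw [show i + m + d = m + (i + d) by omega, Function.iterate_add_apply, ← h,
      ← Function.iterate_add_apply, add_comm]
  have h2 : ∀ q n, i ≤ n → T^[n + q * d] x = T^[n] x := by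
    intro q
    induction q with
    | zero => intro n _; simp
    | succ q ih =>
      intro n hn
      rw [add_mul, one_mul, ← add_assoc, h1 _ (by omega), ih n hn]
  have hd : 0 < d := by omega
  refine ⟨(i+1) * d, by positivity, fun k hk => ?_⟩
  have := h2 (k * (i+1)) (k * ((i+1) * d)) (by
    calc i ≤ 1 * ((i+1) * 1) := by omega
      _ ≤ k * ((i+1) * d) := Nat.mul_le_mul hk (Nat.mul_le_mul le_rfl hd))
  rwa [mul_assoc] at this

lemma iter_idem_fam {X ι : Type*} [Fintype ι] (P : ι → Prop) (T : X → X) (x : ι → X)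
    (hfin : ∀ i, P i → (Set.range fun n => T^[n] (x i)).Finite) :
    ∃ M > 0, ∀ k > 0, ∀ i, P i → T^[k * M + k * M] (x i) = T^[k * M] (x i) := by
  classical
  have : ∀ i, ∃ M > 0, P i → ∀ k > 0, T^[k * M + k * M] (x i) = T^[k * M] (x i) := by
    intro i
    by_cases hi : P i
    · obtain ⟨M, h1, h2⟩ := iter_idem T (x i) (hfin i hi)
      exact ⟨M, h1, fun _ => h2⟩
    · exact ⟨1, one_pos, fun h => absurd h hi⟩
  choose M hM hM' using this
  refine ⟨∏ i, M i, Finset.prod_pos (fun i _ => hM i), fun k hk i hi => ?_⟩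
  obtain ⟨c, hc⟩ := Finset.dvd_prod_of_mem M (Finset.mem_univ i)
  have hpos : 0 < ∏ i, M i := Finset.prod_pos (fun i _ => hM i)
  have hc0 : 0 < c := by
    rcases Nat.eq_zero_or_pos c with rfl | h
    · simp at hc; omega
    · exact h
  have := hM' i hi (k * c) (by positivity)
  rw [hc, mul_comm (M i) c, ← mul_assoc]
  exact this

lemma prefix_word {A : Type*} (F : A → List A) (B : A → Prop) (p C : ℕ)
    (h : ∀ c n q, q <+: applyIter F n [c] → (∀ e ∈ q, B e) → D p q ≤ C) (w : List A) :
    ∀ n q, q <+: applyIter F n w → (∀ e ∈ q, B e) → D p q ≤ w.length * (C + p) := by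
  induction w with
  | nil =>
    intro n q hq _
    rw [applyIter_nil, List.prefix_nil] at hq
    subst hq
    simpa using D_le_length p ([] : List A)
  | cons e w ih =>
    intro n q hq hB
    rw [applyIter_cons] at hq
    rw [List.length_cons, add_mul, one_mul]
    rcases prefix_split hq with h1 | ⟨q', rfl, h1⟩
    · have := h e n q h1 hB
      omega
    · have h2 := h e n _ (List.prefix_refl _) (fun e he => hB e (by simp [he]))
      have h3 := ih n q' h1 (fun e he => hB e (by simp [he]))
      have := D_append p (applyIter F n [e]) q'
      omega

lemma prefix_bound {A : Type*} [Fintype A] (f : A → List A) :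
    ∃ p0 > 0, ∀ p, p0 ∣ p → ∃ C, ∀ c n q, q <+: applyIter f n [c] → (∀ e ∈ q, Bd f e) →
      D p q ≤ C := by
  classical
  obtain ⟨M1, hM1, hM1'⟩ := iter_idem_fam (Bd f) (applyMorphism f) (fun e => [e]) (by
    rintro e ⟨K, hK⟩
    refine (List.finite_length_le A K).subset ?_
    rintro _ ⟨n, rfl⟩
    exact hK n)
  have hL0 : ∀ c, ∃ d l r, ¬ Bd f c → f c = l ++ d :: r ∧ (∀ e ∈ l, Bd f e) ∧ ¬ Bd f d := by
    intro c
    by_cases hc : Bd f c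
    · exact ⟨c, [], [], fun h => absurd hc h⟩
    · obtain ⟨l, d, r, h⟩ := first_split (Bd f) (f c) (by rwa [← bd_image])
      exact ⟨d, l, r, fun _ => h⟩
  choose L l r hL using hL0
  obtain ⟨M2, hM2, hM2'⟩ := iter_idem_fam (fun _ => True) L (fun e => e)
    (fun _ _ => Set.toFinite _)
  have hiter : ∀ n c, ¬ Bd f c → ∃ l r, applyIter f n [c] = l ++ L^[n] c :: r ∧
      (∀ e ∈ l, Bd f e) ∧ ¬ Bd f (L^[n] c) := by
    intro n c hc
    induction n with
    | zero => exact ⟨[], [], rfl, by simp, hc⟩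
    | succ n ih =>
      obtain ⟨l', r', h1, h2, h3⟩ := ih
      obtain ⟨h4, h5, h6⟩ := hL _ h3
      rw [applyIter_succ', h1, Function.iterate_succ_apply']
      refine ⟨applyMorphism f l' ++ l (L^[n] c), r (L^[n] c) ++ applyMorphism f r', ?_, ?_, h6⟩
      · have : L^[n] c :: r' = [L^[n] c] ++ r' := rfl
        rw [applyMorphism_append, this, applyMorphism_append, applyMorphism_singleton, h4]
        simp
      · intro e he
        rcases List.mem_append.1 he with he | he
        · exact bd_morph f _ h2 e he
        · exact h5 e he
  obtain ⟨M, hMdef⟩ : ∃ M, M = M1 * M2 := ⟨_, rfl⟩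
  have hM : 0 < M := by rw [hMdef]; positivity
  let F : A → List A := fun e => applyIter f M [e]
  have hFw : ∀ w, applyMorphism F w = applyIter f M w := by
    intro w
    induction w with
    | nil => rw [applyIter_nil]; rfl
    | cons e w ih =>
      rw [applyIter_cons, ← ih]
      simp [applyMorphism, F]
  have hFi : ∀ n w, applyIter F n w = applyIter f (n * M) w := by
    intro n w
    induction n with
    | zero => simp [applyIter_zero]
    | succ n ih => rw [applyIter_succ', ih, hFw, ← applyIter_add]; congr 1; ring
  obtain ⟨p0, hp0, hp⟩ := prefix_bound_idem F (Bd f) (by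
      intro e he
      rw [hFw]
      simp only [F]
      rw [← applyIter_add]
      have := hM1' M2 hM2 e he
      rw [mul_comm, ← hMdef] at this
      exact this) (L^[M]) (by
      intro c hc
      rw [← Function.iterate_add_apply]
      have := hM2' M1 hM1 c trivial
      rwa [← hMdef] at this) (fun c hc => hiter M c hc)
  refine ⟨p0, hp0, fun p hpp => ?_⟩
  obtain ⟨C, hC⟩ := hp p hpp
  refine ⟨(∑ c, ∑ r ∈ Finset.range M, (applyIter f r [c]).length) * (C + p), ?_⟩
  intro c n q hq hqB
  have hn : n = (n / M) * M + n % M := (Nat.div_add_mod' n M).symm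
  rw [hn, applyIter_add, ← hFi] at hq
  refine (prefix_word F _ p C hC _ _ q hq hqB).trans (Nat.mul_le_mul_right _ ?_)
  have h1 := Finset.single_le_sum (f := fun r => (applyIter f r [c]).length)
    (fun _ _ => Nat.zero_le _) (Finset.mem_range.2 (Nat.mod_lt n hM))
  have h2 := Finset.single_le_sum (f := fun c => ∑ r ∈ Finset.range M, (applyIter f r [c]).length)
    (fun _ _ => Nat.zero_le _) (Finset.mem_univ c)
  exact h1.trans h2

lemma applyIter_rev {A : Type*} (f : A → List A) (n : ℕ) (w : List A) :
    applyIter (fun e => (f e).reverse) n w.reverse = (applyIter f n w).reverse := by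
  induction n with
  | zero => rfl
  | succ n ih =>
    rw [applyIter_succ', applyIter_succ', ih]
    generalize applyIter f n w = u
    induction u with
    | nil => rfl
    | cons e u ih =>
      rw [List.reverse_cons, applyMorphism_append, ih]
      simp [applyMorphism]

lemma suffix_bound {A : Type*} [Fintype A] (f : A → List A) :
    ∃ p0 > 0, ∀ p, p0 ∣ p → ∃ C, ∀ c n q, q <:+ applyIter f n [c] → (∀ e ∈ q, Bd f e) →
      D p q ≤ C := by
  have hi : ∀ n c, applyIter (fun e => (f e).reverse) n [c] = (applyIter f n [c]).reverse := by
    intro n c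
    exact applyIter_rev f n [c]
  have hbd : ∀ e, Bd f e → Bd (fun e => (f e).reverse) e := by
    rintro e ⟨K, hK⟩
    refine ⟨K, fun n => ?_⟩
    rw [hi, List.length_reverse]
    exact hK n
  obtain ⟨p0, h0, h1⟩ := prefix_bound (fun e => (f e).reverse)
  refine ⟨p0, h0, fun p hp => ?_⟩
  obtain ⟨C, hC⟩ := h1 p hp
  refine ⟨C, fun c n q hq hB => (D_reverse_le p q).trans (hC c n _ ?_ ?_)⟩
  · rw [hi]
    exact List.reverse_prefix.2 hq
  · intro e he
    exact hbd e (hB e (by simpa using he))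

lemma infix_bound {A : Type*} [Fintype A] (f : A → List A) :
    ∃ p > 0, ∃ C, ∀ n c q, q <:+: applyIter f n [c] → (∀ e ∈ q, Bd f e) → D p q ≤ C := by
  obtain ⟨p1, h1, h1'⟩ := prefix_bound f
  obtain ⟨p2, h2, h2'⟩ := suffix_bound f
  obtain ⟨C1, hC1⟩ := h1' (p1 * p2) (dvd_mul_right _ _)
  obtain ⟨C2, hC2⟩ := h2' (p1 * p2) (dvd_mul_left _ _)
  obtain ⟨p, hp⟩ : ∃ p, p = p1 * p2 := ⟨_, rfl⟩
  rw [← hp] at hC1 hC2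
  obtain ⟨S, hS⟩ : ∃ S, ∀ c, (f c).length ≤ S := ⟨∑ c, (f c).length, fun c =>
    Finset.single_le_sum (f := fun c => (f c).length) (fun _ _ => Nat.zero_le _)
      (Finset.mem_univ c)⟩
  refine ⟨p, by rw [hp]; positivity, S * (C1 + p) + C2 + p + 1, fun n => ?_⟩
  induction n with
  | zero =>
    intro c q hq _
    have h := (D_le_length p q).trans hq.length_le
    simp [applyIter_zero] at h
    omega
  | succ n ih =>
    intro c q hq hB
    rw [applyIter_succ, applyMorphism_singleton] at hq
    have hlen := hS c
    revert hq
    generalize f c = w at hlen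
    induction w with
    | nil =>
      intro hq
      rw [applyIter_nil] at hq
      have h := (D_le_length p q).trans hq.length_le
      simp at h
      omega
    | cons e w ihw =>
      intro hq
      rw [List.length_cons] at hlen
      rw [applyIter_cons] at hq
      rcases infix_split hq with h | h | ⟨s, r, rfl, hs, hr⟩
      · exact ih e q h hB
      · exact ihw (by omega) h
      · have e1 := hC2 e n s hs (fun e he => hB e (by simp [he]))
        have e2 := prefix_word f _ p C1 hC1 w n r hr (fun e he => hB e (by simp [he]))
        have e3 := D_append p s r
        have e4 : w.length * (C1 + p) ≤ S * (C1 + p) := Nat.mul_le_mul_right _ (by omega)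
        omega

lemma ult_of_bd {A : Type*} [Fintype A] (f : A → List A) (a : A) (x : ℕ → A)
    (hx : IsPureMorphic f a x) (t : ℕ → A) (ht : InOrbitClosure t x) (hb : ∀ i, Bd f (t i)) :
    ∃ N p, 0 < p ∧ ∀ n, N ≤ n → t (n + p) = t n := by
  obtain ⟨p, hp, C, hC⟩ := infix_bound f
  obtain ⟨hx0, ⟨s, hs, hs0, hsn⟩, hxi⟩ := hx
  have hpre : ∀ n, IsPrefixOfWord (applyIter f n [a]) x := by
    intro n
    induction n with
    | zero =>
      rw [isPrefix_iff]
      intro i hi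
      simp [applyIter_zero] at hi ⊢
      subst hi; exact hx0.symm
    | succ n ih => rw [applyIter_succ']; exact image_prefix hxi ih
  have hlen : ∀ n, n ≤ (applyIter f n [a]).length := by
    intro n
    induction n with
    | zero => omega
    | succ n ih =>
      rw [applyIter_succ, applyMorphism_singleton, hs, applyIter_cons, List.length_append]
      have := List.length_pos_iff.2 (hsn n)
      omega
  have hD : ∀ n, D p (wordPrefix t n) ≤ C := by
    intro n
    obtain ⟨i, hi⟩ := ht (wordPrefix t n) ⟨0, by
      rw [length_wordPrefix]; simp [wordPrefix]⟩
    refine hC (i + n) a _ ?_ ?_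
    · have hinf : wordPrefix t n <:+: wordPrefix x (i + n) := by
        refine ⟨wordPrefix x i, [], ?_⟩
        rw [List.append_nil, hi]
        apply List.ext_getElem
        · simp [wordPrefix]
        · intro j h1 h2
          rw [getElem_wordPrefix]
          by_cases hj : j < i
          · rw [List.getElem_append_left (by rw [length_wordPrefix]; exact hj), getElem_wordPrefix]
          · rw [List.getElem_append_right (by rw [length_wordPrefix]; omega)]
            simp [length_wordPrefix]
            congr 1; omega
      refine hinf.trans (List.IsPrefix.isInfix ?_)
      exact prefix_of_le (wordPrefix_isPrefix _ _) (hpre _)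
        (by rw [length_wordPrefix]; exact hlen _)
    · intro e he
      simp only [wordPrefix, List.mem_ofFn] at he
      obtain ⟨j, rfl⟩ := he
      exact hb _
  have hfin : {i | t (i + p) ≠ t i}.Finite := by
    by_contra hinf
    obtain ⟨T, hT, hcard⟩ := Set.Infinite.exists_subset_card_eq hinf (C+1)
    obtain ⟨m, hm⟩ := T.bddAbove
    have : T ⊆ Dset p (wordPrefix t (m + p + 1)) := by
      intro i hi
      have him : i ≤ m := hm hi
      have h := hT hi
      rw [mem_Dset, length_wordPrefix]
      refine ⟨by omega, ?_⟩
      rw [List.getElem?_eq_getElem (by rw [length_wordPrefix]; omega),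
        List.getElem?_eq_getElem (by rw [length_wordPrefix]; omega), getElem_wordPrefix,
        getElem_wordPrefix]
      intro h'
      exact h (Option.some.inj h').symm
    have h1 := Finset.card_le_card this
    have h2 := hD (m + p + 1)
    unfold D at h2
    omega
  obtain ⟨m, hm⟩ := hfin.bddAbove
  refine ⟨m + 1, p, hp, fun n hn => ?_⟩
  by_contra h
  have : n ≤ m := hm h
  omega

end St4

theorem stmt4 {A : Type*} [Fintype A] (f : A → List A) (a : A) (x : ℕ → A)
    (hx : IsPureMorphic f a x) (t : ℕ → A) (ht : InOrbitClosure t x)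
    (hfix : IsWordImage f t t) :
    IsMorphic t := by
  classical
  open St4 in
  by_cases hb : ∀ i, Bd f (t i)
  · obtain ⟨N, p, hp, h⟩ := ult_of_bd f a x hx t ht hb
    exact morphic_of_ult t N p hp h
  · push Not at hb
    obtain ⟨m, hm, hmin⟩ : ∃ m, ¬ Bd f (t m) ∧ ∀ i < m, Bd f (t i) :=
      ⟨Nat.find hb, Nat.find_spec hb, fun i hi => not_not.1 (Nat.find_min hb hi)⟩
    have hw := wordPrefix_isPrefix t (m+1)
    have hmw : t m ∈ wordPrefix t (m+1) := by
      simp only [wordPrefix, List.mem_ofFn]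
      exact ⟨⟨m, by omega⟩, rfl⟩
    have hfw := image_prefix hfix hw
    have hlong : m + 1 ≤ (applyMorphism f (wordPrefix t (m+1))).length := by
      have h1 : ¬ ∀ d ∈ f (t m), Bd f d := by rwa [← bd_image]
      push Not at h1
      obtain ⟨d, hd, hdb⟩ := h1
      have hd' : d ∈ applyMorphism f (wordPrefix t (m+1)) := by
        simp only [applyMorphism, List.mem_flatMap]
        exact ⟨_, hmw, hd⟩
      obtain ⟨i, hi, rfl⟩ := List.getElem_of_mem hd'
      by_contra hlt
      rw [(isPrefix_iff _ _).1 hfw i hi] at hdb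
      exact hdb (hmin i (by omega))
    obtain ⟨v, hv⟩ := prefix_of_le hw hfw (by rwa [length_wordPrefix])
    refine morphic_of_tail f (m+1) t (by omega) v ?_ ?_
    · intro n hn
      apply hm
      have hbw : ∃ K, ∀ k, (applyIter f k (wordPrefix t (m+1))).length ≤ K := by
        have hconst : ∀ k, applyIter f (n + k) (wordPrefix t (m+1)) =
            applyIter f n (wordPrefix t (m+1)) := by
          intro k
          induction k with
          | zero => rfl
          | succ k ih =>
            rw [← add_assoc, applyIter_succ, ← hv, applyIter_append, ih, add_comm n k,
              applyIter_add f k n v, hn, applyIter_nil, List.append_nil]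
        refine ⟨∑ k ∈ Finset.range (n+1), (applyIter f k (wordPrefix t (m+1))).length, fun k => ?_⟩
        have hs : ∀ k ≤ n, (applyIter f k (wordPrefix t (m+1))).length ≤
            ∑ k ∈ Finset.range (n+1), (applyIter f k (wordPrefix t (m+1))).length := fun k hk =>
          Finset.single_le_sum (f := fun k => (applyIter f k (wordPrefix t (m+1))).length)
            (fun _ _ => Nat.zero_le _) (Finset.mem_range.2 (by omega))
        by_cases hk : k ≤ n
        · exact hs k hk
        · obtain ⟨j, rfl⟩ := Nat.exists_eq_add_of_le (show n ≤ k by omega)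
          rw [hconst]
          exact hs n le_rfl
      exact bd_word_conv f _ hbw _ hmw
    · intro n
      have h1 : wordPrefix t (m+1+n) =
          wordPrefix t (m+1) ++ wordPrefix (fun i => t (m+1+i)) n := by
        apply List.ext_getElem
        · simp only [wordPrefix, List.length_append, List.length_ofFn]
        · intro j h1 h2
          rw [getElem_wordPrefix]
          by_cases hj : j < m + 1
          · rw [List.getElem_append_left (by rw [length_wordPrefix]; exact hj), getElem_wordPrefix]
          · rw [List.getElem_append_right (by rw [length_wordPrefix]; omega), getElem_wordPrefix]
            rw [length_wordPrefix]
            congr 1; omega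
      have h2 := hfix (m+1+n)
      rw [h1, applyMorphism_append, ← hv, List.append_assoc, isPrefix_iff] at h2
      rw [isPrefix_iff]
      intro i hi
      have h3 := h2 (m+1+i) (by rw [List.length_append, length_wordPrefix]; omega)
      rw [List.getElem_append_right (by rw [length_wordPrefix]; omega)] at h3
      simp only [length_wordPrefix, Nat.add_sub_cancel_left] at h3
      exact h3
end

section
/- Let f : A* → A* be a morphism with a fixed infinite word x (f(x) = x) such that f ∈ M_x. Then for any total order ρ on A and any letter b occurring in x, there exist a total order σ on A, a letter a ∈ A, finite words u, v, and integers k, m ≥ 1 such that s_{b,ρ,x} = u·f^k(s_{a,σ,x}) and s_{a,σ,x} = v·f^m(s_{a,σ,x}), where s_{c,τ,x} denotes the lexicographically least (w.r.t. τ) word in the shift orbit closure of x beginning with c, with its first letter removed. -/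
namespace S19

def sh {A : Type*} (z : ℕ → A) (k : ℕ) : ℕ → A := fun n => z (n + k)

theorem sh_sh {A : Type*} (s : ℕ → A) (r q : ℕ) : sh (sh s r) q = sh s (q + r) := by
  funext n; simp only [sh, Nat.add_assoc]

theorem pre_iff {A : Type*} (w : List A) (y : ℕ → A) :
    IsPrefixOfWord w y ↔ ∀ j, j < w.length → w[j]? = some (y j) := by
  unfold IsPrefixOfWord wordPrefix
  constructor
  · intro h j hj
    rw [← h]
    simp [hj]
  · intro h
    apply List.ext_getElem
    · simp
    · intro i h1 h2
      have := h i h2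
      rw [List.getElem?_eq_getElem h2] at this
      simp at this
      simp [this]

theorem wp_length {A : Type*} (z : ℕ → A) (n : ℕ) : (wordPrefix z n).length = n := by
  simp [wordPrefix]

theorem wp_get {A : Type*} (z : ℕ → A) (n j : ℕ) (h : j < n) :
    (wordPrefix z n)[j]? = some (z j) := by
  simp [wordPrefix, h]

theorem wp_congr {A : Type*} (z z' : ℕ → A) (n : ℕ) (h : ∀ j, j < n → z j = z' j) :
    wordPrefix z n = wordPrefix z' n := by
  unfold wordPrefix
  congr 1
  funext i
  exact h i i.2

theorem wp_add {A : Type*} (z : ℕ → A) (k n : ℕ) :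
    wordPrefix z (k + n) = wordPrefix z k ++ wordPrefix (sh z k) n := by
  unfold wordPrefix sh
  rw [List.ofFn_add]
  congr 1
  simp [Nat.add_comm]

theorem wp_one {A : Type*} (z : ℕ → A) : wordPrefix z 1 = [z 0] := by
  simp [wordPrefix]

theorem fac_iff {A : Type*} (y x : ℕ → A) :
    InOrbitClosure y x ↔ ∀ n, ∃ i, ∀ j, j < n → y j = x (i + j) := by
  constructor
  · intro h n
    obtain ⟨i, hi⟩ := h (wordPrefix y n) ⟨0, by
      apply List.ext_getElem <;> simp [wordPrefix]⟩
    refine ⟨i, fun j hj => ?_⟩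
    have h1 := wp_get y n j hj
    rw [hi] at h1
    simp [wp_length, hj] at h1
    exact h1.symm
  · rintro h w ⟨i, hi⟩
    obtain ⟨k, hk⟩ := h (i + w.length)
    refine ⟨k + i, ?_⟩
    conv_lhs => rw [hi]
    congr 1
    funext j
    rw [hk (i + j) (by omega), Nat.add_assoc]

/-- length of image of the prefix -/
def pos {A B : Type*} (f : A → List B) (z : ℕ → A) (n : ℕ) : ℕ :=
  (applyMorphism f (wordPrefix z n)).length

theorem pos_one {A B : Type*} (f : A → List B) (z : ℕ → A) :
    pos f z 1 = (f (z 0)).length := by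
  simp [pos, wp_one, applyMorphism]

theorem pos_add {A B : Type*} (f : A → List B) (z : ℕ → A) (k n : ℕ) :
    pos f z (k + n) = pos f z k + pos f (sh z k) n := by
  simp [pos, wp_add, applyMorphism]

theorem pos_succ {A B : Type*} (f : A → List B) (z : ℕ → A) (k : ℕ) :
    pos f z (k + 1) = pos f z k + (f (z k)).length := by
  rw [pos_add, pos_one]; simp [sh]

theorem pos_ge {A B : Type*} (f : A → List B) (z : ℕ → A) (h : ∀ i, f (z i) ≠ []) (n : ℕ) :
    n ≤ pos f z n := by
  induction n with
  | zero => simp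
  | succ n ih =>
    rw [pos_succ]
    have := List.length_pos_of_ne_nil (h n)
    omega

theorem img_shift {A B : Type*} (f : A → List B) (z : ℕ → A) (y : ℕ → B)
    (h : IsWordImage f z y) (k : ℕ) : IsWordImage f (sh z k) (sh y (pos f z k)) := by
  intro n
  have h1 := h (k + n)
  rw [pre_iff] at h1 ⊢
  intro j hj
  have h2 := h1 (pos f z k + j) (by
    change _ < pos f z (k + n)
    rw [pos_add]
    change j < pos f (sh z k) n at hj
    omega)
  rw [wp_add, applyMorphism, List.flatMap_append,
    List.getElem?_append_right (by simp [pos, applyMorphism])] at h2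
  simp only [pos, applyMorphism, Nat.add_sub_cancel_left] at h2
  simp only [sh, applyMorphism, pos]
  rw [Nat.add_comm j]
  exact h2

theorem agree {A B : Type*} (f : A → List B) (z z' : ℕ → A) (y y' : ℕ → B)
    (h : IsWordImage f z y) (h' : IsWordImage f z' y') (N : ℕ)
    (hz : ∀ j, j < N → z j = z' j) (j : ℕ) (hj : j < pos f z N) : y j = y' j := by
  have h1 := (pre_iff _ _).1 (h N) j hj
  have h2 := (pre_iff _ _).1 (h' N) j (by rw [← wp_congr z z' N hz]; exact hj)
  rw [← wp_congr z z' N hz, h1] at h2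
  exact Option.some.inj h2

theorem img_exists {A B : Type*} (f : A → List B) (z : ℕ → A) (h : ∀ i, f (z i) ≠ []) :
    ∃ y, IsWordImage f z y := by
  have hl : ∀ n, n < (applyMorphism f (wordPrefix z (n+1))).length := fun n =>
    pos_ge f z h (n+1)
  refine ⟨fun n => (applyMorphism f (wordPrefix z (n+1)))[n]'(hl n), ?_⟩
  intro n
  rw [pre_iff]
  intro j hj
  rw [← List.getElem?_eq_getElem]
  rcases le_total n (j+1) with hn | hn
  · obtain ⟨d, hd⟩ := Nat.exists_eq_add_of_le hn
    rw [hd, wp_add]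
    unfold applyMorphism at *
    rw [List.flatMap_append, List.getElem?_append_left hj]
  · obtain ⟨d, rfl⟩ := Nat.exists_eq_add_of_le hn
    rw [wp_add]
    unfold applyMorphism at *
    rw [List.flatMap_append, List.getElem?_append_left (hl j)]

theorem img_comp {A B C : Type*} (f : A → List B) (g : B → List C) (w : ℕ → A) (z : ℕ → B)
    (y : ℕ → C) (h : IsWordImage f w z) (h' : IsWordImage g z y) :
    IsWordImage (fun c => applyMorphism g (f c)) w y := by
  intro n
  have h1 : wordPrefix z _ = _ := h n
  have h2 := h' (applyMorphism f (wordPrefix w n)).length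
  rw [h1] at h2
  convert h2 using 1
  simp only [applyMorphism, List.flatMap_assoc]

theorem iter_flat {A : Type*} (f : A → List A) (k : ℕ) (w : List A) :
    applyIter f k w = applyMorphism (fun c => applyIter f k [c]) w := by
  induction k generalizing w with
  | zero => simp [applyIter, applyMorphism]
  | succ k ih =>
    have hs : ∀ w, applyIter f (k+1) w = applyIter f k (applyMorphism f w) := fun w => by
      simp [applyIter]
    rw [hs, ih]
    simp only [hs]
    have : (fun c => applyIter f k (applyMorphism f [c])) =
      fun c => applyMorphism (fun c => applyIter f k [c]) (f c) := by
      funext c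
      rw [ih]; simp [applyMorphism]
    rw [this]
    simp only [applyMorphism, List.flatMap_assoc]

theorem iter_succ {A : Type*} (f : A → List A) (k : ℕ) :
    (fun c => applyIter f (k+1) [c]) =
      fun c => applyMorphism (fun c => applyIter f k [c]) (f c) := by
  funext c
  rw [← iter_flat]
  simp [applyIter, applyMorphism]

theorem oc_sh {A : Type*} (y x : ℕ → A) (h : InOrbitClosure y x) (k : ℕ) :
    InOrbitClosure (sh y k) x := by
  rw [fac_iff] at *
  intro n
  obtain ⟨i, hi⟩ := h (n + k)
  refine ⟨i + k, fun j hj => ?_⟩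
  simp only [sh]
  rw [hi (j + k) (by omega)]
  congr 1; omega

theorem oc_self {A : Type*} (x : ℕ → A) : InOrbitClosure x x := fun _ h => h

theorem oc_letter {A : Type*} (y x : ℕ → A) (h : InOrbitClosure y x) (k : ℕ) :
    ∃ i, y k = x i := by
  rw [fac_iff] at h
  obtain ⟨i, hi⟩ := h (k+1)
  exact ⟨i + k, hi k (by omega)⟩

theorem nonerasing {A : Type*} (f : A → List A) (x : ℕ → A) (hM : MemM f x) (i : ℕ) :
    f (x i) ≠ [] := by
  obtain ⟨p, hp0, hp1, hp2⟩ := hM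
  intro he
  have key : ∀ i, f (x i) = [] → x (i+1) = x i := by
    intro i hi
    by_contra hne
    obtain ⟨n, hn⟩ := hp1 (x i) (sh x i) (oc_sh x x (oc_self x) i) (by simp [sh])
    obtain ⟨m, hm⟩ := hp1 (x (i+1)) (sh x (i+1)) (oc_sh x x (oc_self x) (i+1)) (by simp [sh])
    have e : ∀ N, applyMorphism f (wordPrefix (sh x i) (1 + N))
        = applyMorphism f (wordPrefix (sh x (i+1)) N) := by
      intro N
      rw [wp_add, wp_one]
      have : sh (sh x i) 1 = sh x (i+1) := by
        funext n; simp only [sh]; congr 1; omega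
      rw [this]
      simp [applyMorphism, sh, hi]
    have mono : ∀ (z : ℕ → A) (a c : ℕ),
        applyMorphism f (wordPrefix z a) <+: applyMorphism f (wordPrefix z (a + c)) := by
      intro z a c
      rw [wp_add]; simp [applyMorphism]
    have h1 : p (x i) <+: applyMorphism f (wordPrefix (sh x (i+1)) (n + m)) := by
      rw [← e]
      refine hn.trans ?_
      have := mono (sh x i) n (1 + m)
      rwa [show n + (1 + m) = 1 + (n + m) by omega] at this
    have h2 : p (x (i+1)) <+: applyMorphism f (wordPrefix (sh x (i+1)) (n + m)) := by
      refine hm.trans ?_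
      rw [Nat.add_comm n m]; exact mono _ _ _
    have h3 := hp2 _ _ hne
    rcases List.prefix_or_prefix_of_prefix h1 h2 with h | h
    · exact h3.2 h
    · exact h3.1 h
  have all : ∀ j, f (x (j + i)) = [] := by
    intro j
    induction j with
    | zero => simpa using he
    | succ j ih =>
      have := key _ ih
      rw [show j + 1 + i = j + i + 1 by omega, this]; exact ih
  obtain ⟨n, hn⟩ := hp1 (x i) (sh x i) (oc_sh x x (oc_self x) i) (by simp [sh])
  have : applyMorphism f (wordPrefix (sh x i) n) = [] := by
    simp only [applyMorphism, List.flatMap_eq_nil_iff, wordPrefix, List.mem_ofFn, sh]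
    rintro a ⟨j, rfl⟩
    exact all j
  rw [this] at hn
  exact hp0 _ (List.prefix_nil.1 hn)

theorem oc_img {A : Type*} (f : A → List A) (x : ℕ → A) (hfix : IsWordImage f x x)
    (hne : ∀ i, f (x i) ≠ []) (y Y : ℕ → A) (hy : InOrbitClosure y x)
    (hY : IsWordImage f y Y) : InOrbitClosure Y x := by
  have hney : ∀ i, f (y i) ≠ [] := fun i => by
    obtain ⟨k, hk⟩ := oc_letter y x hy i
    rw [hk]; exact hne k
  rw [fac_iff]
  intro n
  obtain ⟨i, hi⟩ := (fac_iff y x).1 hy n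
  refine ⟨pos f x i, fun j hj => ?_⟩
  rw [agree f y (sh x i) Y _ hY (img_shift f x x hfix i) n
    (fun j hj => by simp only [sh]; rw [hi j hj, Nat.add_comm]) j
    (lt_of_lt_of_le hj (pos_ge f y hney n))]
  simp only [sh]; rw [Nat.add_comm]

theorem ult {A : Type*} [Finite A] (U : Ultrafilter ℕ) (g : ℕ → A) :
    ∃ a, ∀ᶠ n in (U : Filter ℕ), g n = a := by
  have := (Ultrafilter.eventually_exists_iff (f := U) (P := fun (a : A) n => g n = a)).1
    (Filter.Eventually.of_forall fun n => ⟨g n, rfl⟩)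
  exact this

theorem desub {A : Type*} [Finite A] (f : A → List A) (x : ℕ → A) (hfix : IsWordImage f x x)
    (hne : ∀ i, f (x i) ≠ []) (l : ℕ → A) (hl : InOrbitClosure l x) :
    ∃ z Y, InOrbitClosure z x ∧ IsWordImage f z Y ∧ ∃ r, r < (f (z 0)).length ∧
      ∀ j, l j = Y (r + j) := by
  rw [fac_iff] at hl
  choose i hi using hl
  have hk : ∀ n, ∃ k r, i n = pos f x k + r ∧ r < (f (x k)).length := by
    intro n
    have hex : ∃ k, i n < pos f x (k+1) := ⟨i n, pos_ge f x hne (i n + 1)⟩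
    classical
    refine ⟨Nat.find hex, i n - pos f x (Nat.find hex), ?_⟩
    have h1 := Nat.find_spec hex
    rw [pos_succ] at h1
    have h2 : pos f x (Nat.find hex) ≤ i n := by
      rcases hq : Nat.find hex with _ | q
      · simp [pos, wordPrefix, applyMorphism]
      · have := Nat.find_min hex (m := q) (by omega)
        omega
    omega
  choose k r hkr hr using hk
  obtain ⟨M, hM⟩ : ∃ M, ∀ a : A, (f a).length < M := by
    obtain ⟨M, hM⟩ := (Set.finite_range (fun a : A => (f a).length)).bddAbove
    exact ⟨M + 1, fun a => Nat.lt_succ_of_le (hM ⟨a, rfl⟩)⟩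
  let U := Filter.hyperfilter ℕ
  have hz := fun m => ult U (fun n => x (k n + m))
  choose z hz using hz
  obtain ⟨R, hR⟩ := ult U (fun n => (⟨r n, (hr n).trans (hM _)⟩ : Fin M))
  have hzN : ∀ N, ∀ᶠ n in (U : Filter ℕ), ∀ m, m < N → x (k n + m) = z m := by
    intro N
    have := (Filter.eventually_all_finite (Set.finite_Iio N)
      (l := (U : Filter ℕ)) (p := fun m n => x (k n + m) = z m)).2 (fun m _ => hz m)
    exact this
  have hgt : ∀ N, ∀ᶠ n in (U : Filter ℕ), N < n := by
    intro N
    have : ∀ᶠ n in (Filter.atTop : Filter ℕ), N < n := Filter.eventually_gt_atTop N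
    rw [← Nat.cofinite_eq_atTop] at this
    exact Filter.hyperfilter_le_cofinite this
  have hzo : InOrbitClosure z x := by
    rw [fac_iff]
    intro N
    obtain ⟨n, hn⟩ := (hzN N).exists
    exact ⟨k n, fun j hj => (hn j hj).symm⟩
  have hnez : ∀ i, f (z i) ≠ [] := fun i => by
    obtain ⟨k, hk⟩ := oc_letter z x hzo i
    rw [hk]; exact hne k
  obtain ⟨Y, hY⟩ := img_exists f z hnez
  refine ⟨z, Y, hzo, hY, R, ?_, ?_⟩
  · obtain ⟨n, hn1, hn2⟩ := ((hzN 1).and hR).exists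
    have h1 := hn1 0 (by omega)
    have h2 := hr n
    rw [← h1, ← hn2]
    exact h2
  · intro j
    obtain ⟨n, ⟨hn1, hn2⟩, hn3⟩ := (((hzN (R + j + 1)).and hR).and (hgt j)).exists
    rw [hi n j hn3, hkr n]
    have := agree f z (sh x (k n)) Y _ hY (img_shift f x x hfix (k n)) (R + j + 1)
      (fun m hm => by simp only [sh]; rw [← hn1 m hm, Nat.add_comm]) (R + j)
      (pos_ge f z hnez _)
    rw [this, ← hn2]
    simp only [sh]
    congr 1; omega

def ordP {A : Type*} (ρ : A → A → Prop) (p : A → List A) (c d : A) : Prop :=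
  ∃ n : ℕ, (∀ i : ℕ, i < n → (p c)[i]? = (p d)[i]?) ∧
    ∃ a b, (p c)[n]? = some a ∧ (p d)[n]? = some b ∧ ρ a b

theorem ordP_tri {A : Type*} (ρ : A → A → Prop) (hρ : IsStrictTotalOrder A ρ) (p : A → List A)
    (hp : ∀ a b : A, a ≠ b → ¬ p a <+: p b ∧ ¬ p b <+: p a) (c d : A) (hcd : c ≠ d) :
    ordP ρ p c d ∨ ordP ρ p d c := by
  classical
  have hex : ∃ n : ℕ, (p c)[n]? ≠ (p d)[n]? := by
    by_contra h
    push Not at h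
    have : p c = p d := List.ext_getElem? h
    exact (hp c d hcd).1 (this ▸ List.prefix_refl _)
  have h1 := Nat.find_spec hex
  have h2 : ∀ i, i < Nat.find hex → (p c)[i]? = (p d)[i]? := fun i hi => by
    have := Nat.find_min hex hi
    push Not at this; exact this
  set n := Nat.find hex
  have pfx : ∀ s t : List A, (∀ i, i < n → s[i]? = t[i]?) → s[n]? = none → s <+: t := by
    intro s t h hn
    rw [List.prefix_iff_getElem?]
    intro i hi
    rw [List.getElem?_eq_none_iff] at hn
    rw [← h i (by omega)]
    simp [hi]
  rcases hc : (p c)[n]? with _ | a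
  · exact absurd (pfx _ _ h2 hc) (hp c d hcd).1
  rcases hd : (p d)[n]? with _ | b
  · exact absurd (pfx _ _ (fun i hi => (h2 i hi).symm) hd) (hp c d hcd).2
  have hab : a ≠ b := by
    rintro rfl
    exact h1 (hc.trans hd.symm)
  rcases trichotomous_of ρ a b with h | h | h
  · exact Or.inl ⟨n, h2, a, b, hc, hd, h⟩
  · exact absurd h hab
  · exact Or.inr ⟨n, fun i hi => (h2 i hi).symm, b, a, hd, hc, h⟩

theorem ordP_irr {A : Type*} (ρ : A → A → Prop) (hρ : IsStrictTotalOrder A ρ) (p : A → List A)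
    (c : A) : ¬ ordP ρ p c c := by
  rintro ⟨n, -, a, b, h1, h2, h3⟩
  rw [h1] at h2
  obtain rfl := Option.some.inj h2
  exact irrefl_of ρ a h3

theorem ordP_trans {A : Type*} (ρ : A → A → Prop) (hρ : IsStrictTotalOrder A ρ) (p : A → List A)
    (c d e : A) : ordP ρ p c d → ordP ρ p d e → ordP ρ p c e := by
  rintro ⟨n, h, a, b, ha, hb, hab⟩ ⟨m, h', a', b', ha', hb', hab'⟩
  rcases lt_trichotomy n m with hnm | rfl | hnm
  · exact ⟨n, fun i hi => (h i hi).trans (h' i (by omega)), a, b, ha, (h' n hnm).symm.trans hb, hab⟩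
  · rw [hb] at ha'
    obtain rfl := Option.some.inj ha'
    exact ⟨n, fun i hi => (h i hi).trans (h' i hi), a, b', ha, hb', trans_of ρ hab hab'⟩
  · exact ⟨m, fun i hi => (h i (by omega)).trans (h' i hi), a', b', (h m hnm).trans ha', hb', hab'⟩

theorem ordP_sto {A : Type*} (ρ : A → A → Prop) (hρ : IsStrictTotalOrder A ρ) (p : A → List A)
    (hp : ∀ a b : A, a ≠ b → ¬ p a <+: p b ∧ ¬ p b <+: p a) :
    IsStrictTotalOrder A (ordP ρ p) where
  trichotomous := by
    intro a b h1 h2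
    by_contra h
    rcases ordP_tri ρ hρ p hp a b h with h | h
    · exact h1 h
    · exact h2 h
  irrefl := ordP_irr ρ hρ p
  trans := ordP_trans ρ hρ p

theorem lex_tri {A : Type*} (ρ : A → A → Prop) (hρ : IsStrictTotalOrder A ρ) (y z : ℕ → A) :
    LexLe ρ y z ∨ LexLt ρ z y := by
  classical
  by_cases h : y = z
  · exact Or.inl (Or.inr h)
  have hex : ∃ n, y n ≠ z n := by
    by_contra h'
    push Not at h'
    exact h (funext h')
  have h1 := Nat.find_spec hex
  have h2 : ∀ i, i < Nat.find hex → y i = z i := fun i hi => by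
    have := Nat.find_min hex hi
    push Not at this; exact this
  rcases trichotomous_of ρ (y (Nat.find hex)) (z (Nat.find hex)) with h | h | h
  · exact Or.inl (Or.inl ⟨_, h2, h⟩)
  · exact absurd h h1
  · exact Or.inr ⟨_, fun i hi => (h2 i hi).symm, h⟩

theorem lex_asymm {A : Type*} (ρ : A → A → Prop) (hρ : IsStrictTotalOrder A ρ) (y z : ℕ → A)
    (h : LexLt ρ y z) (h' : LexLe ρ z y) : False := by
  obtain ⟨n, hn, hr⟩ := h
  rcases h' with ⟨m, hm, hr'⟩ | rfl
  · rcases lt_trichotomy n m with hnm | rfl | hnm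
    · rw [hm n hnm] at hr; exact irrefl_of ρ _ hr
    · exact asymm_of ρ hr hr'
    · rw [hn m hnm] at hr'; exact irrefl_of ρ _ hr'
  · exact irrefl_of ρ _ hr

theorem least_unique {A : Type*} (ρ : A → A → Prop) (hρ : IsStrictTotalOrder A ρ) (x : ℕ → A)
    (b : A) (l l' : ℕ → A) (h : IsLeastWord ρ x b l) (h' : IsLeastWord ρ x b l') : l = l' := by
  rcases h.2.2 l' h'.1 h'.2.1 with h1 | h1
  · exact (lex_asymm ρ hρ _ _ h1 (h'.2.2 l h.1 h.2.1)).elim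
  · exact h1

theorem mono {A : Type*} (f : A → List A) (x : ℕ → A)
    (ρ : A → A → Prop) (p : A → List A)
    (hp1 : ∀ (b : A) (y : ℕ → A), InOrbitClosure y x → y 0 = b →
      ∃ n, p b <+: applyMorphism f (wordPrefix y n))
    (y z Y Z : ℕ → A) (hy : InOrbitClosure y x) (hz : InOrbitClosure z x)
    (hY : IsWordImage f y Y) (hZ : IsWordImage f z Z)
    (h : LexLt (ordP ρ p) y z) : LexLt ρ Y Z := by
  have mk : ∀ (y Y : ℕ → A), InOrbitClosure y x → IsWordImage f y Y →
      ∀ n j, j < (p (y n)).length → (p (y n))[j]? = some (Y (j + pos f y n)) := by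
    intro y Y hy hY n j hj
    obtain ⟨N, hN⟩ := hp1 (y n) (sh y n) (oc_sh y x hy n) (by simp [sh])
    have h1 := (pre_iff _ _).1 (img_shift f y Y hY n N) j (lt_of_lt_of_le hj hN.length_le)
    have h2 := (List.prefix_iff_getElem?.1 hN) j hj
    rw [h1] at h2
    rw [List.getElem?_eq_getElem hj, ← h2]
    rfl
  obtain ⟨n, hn, q, hq, a, b, ha, hb, hab⟩ := h
  have hpos : pos f z n = pos f y n := by
    unfold pos; rw [wp_congr y z n hn]
  have la := (List.getElem?_eq_some_iff.1 ha).1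
  have lb := (List.getElem?_eq_some_iff.1 hb).1
  have my := mk y Y hy hY n
  have mz := mk z Z hz hZ n
  rw [hpos] at mz
  refine ⟨q + pos f y n, ?_, ?_⟩
  · intro i hi
    rcases lt_or_ge i (pos f y n) with h1 | h1
    · exact agree f y z Y Z hY hZ n hn i h1
    · obtain ⟨d, rfl⟩ := Nat.exists_eq_add_of_le' h1
      have hd := hq d (by omega)
      rw [my d (by omega), mz d (by omega)] at hd
      exact Option.some.inj hd
  · rw [my q la] at ha
    rw [mz q lb] at hb
    rw [Option.some.inj ha, Option.some.inj hb]
    exact hab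

theorem step {A : Type*} [Finite A] (f : A → List A) (x : ℕ → A)
    (hfix : IsWordImage f x x) (hM : MemM f x)
    (ρ : A → A → Prop) (hρ : IsStrictTotalOrder A ρ)
    (b : A) (l : ℕ → A) (hl : IsLeastWord ρ x b l) :
    ∃ σ : A → A → Prop, IsStrictTotalOrder A σ ∧ ∃ c l', IsLeastWord σ x c l' ∧
      ∃ r, IsWordImage f (sh l' 1) (sh (sh l 1) r) := by
  have hne := nonerasing f x hM
  obtain ⟨p, hp0, hp1, hp2⟩ := hM
  obtain ⟨z, Y, hz, hY, r, hr, hlY⟩ := desub f x hfix hne l hl.1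
  refine ⟨ordP ρ p, ordP_sto ρ hρ p hp2, z 0, z, ⟨hz, rfl, ?_⟩, ?_⟩
  · intro y hy hy0
    rcases lex_tri (ordP ρ p) (ordP_sto ρ hρ p hp2) z y with h | h
    · exact h
    exfalso
    have hney : ∀ i, f (y i) ≠ [] := fun i => by
      obtain ⟨k, hk⟩ := oc_letter y x hy i
      rw [hk]; exact hne k
    obtain ⟨Y', hY'⟩ := img_exists f y hney
    have ag := agree f z y Y Y' hY hY' 1 (fun j hj => by
      obtain rfl : j = 0 := by omega
      exact hy0.symm)
    rw [pos_one] at ag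
    obtain ⟨q, hq, hqr⟩ := mono f x ρ p hp1 y z Y' Y hy hz hY' hY h
    have hrq : r ≤ q := by
      by_contra hc
      rw [ag q (by omega)] at hqr
      exact irrefl_of ρ _ hqr
    have hlt : LexLt ρ (sh Y' r) l := by
      refine ⟨q - r, fun i hi => ?_, ?_⟩
      · rw [hlY]; simp only [sh]
        rw [hq (i + r) (by omega), Nat.add_comm]
      · rw [hlY]; simp only [sh]
        rw [show q - r + r = q by omega, show r + (q - r) = q by omega]
        exact hqr
    refine lex_asymm ρ hρ _ _ hlt (hl.2.2 _ ?_ ?_)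
    · exact oc_sh _ _ (oc_img f x hfix hne y Y' hy hY') r
    · rw [← hl.2.1, hlY]
      simp only [sh, Nat.zero_add, Nat.add_zero]
      exact (ag r hr).symm
  · refine ⟨(f (z 0)).length - r - 1, ?_⟩
    have := img_shift f z Y hY 1
    rw [pos_one] at this
    convert this using 1
    funext n
    simp only [sh]
    rw [hlY]
    congr 1; omega

theorem prep {A : Type*} (s : ℕ → A) (r : ℕ) : s = prepend (wordPrefix s r) (sh s r) := by
  funext n
  simp only [prepend, wp_length, sh]
  split_ifs with h
  · simp [wordPrefix]
  · congr 1; omega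

end S19

open S19 in
theorem stmt19 {A : Type*} [Fintype A] (f : A → List A) (x : ℕ → A)
    (hfix : IsWordImage f x x) (hM : MemM f x)
    (ρ : A → A → Prop) (hρ : IsStrictTotalOrder A ρ)
    (b : A) (hb : ∃ i, x i = b)
    (lb : ℕ → A) (hlb : IsLeastWord ρ x b lb) :
    ∃ σ : A → A → Prop, IsStrictTotalOrder A σ ∧
      ∃ (a : A) (la : ℕ → A), IsLeastWord σ x a la ∧
        ∃ (u v : List A) (k m : ℕ), 1 ≤ k ∧ 1 ≤ m ∧
          (∃ y : ℕ → A,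
            IsWordImage (fun c => applyIter f k [c]) (fun n => la (n + 1)) y ∧
            (fun n => lb (n + 1)) = prepend u y) ∧
          (∃ y : ℕ → A,
            IsWordImage (fun c => applyIter f m [c]) (fun n => la (n + 1)) y ∧
            (fun n => la (n + 1)) = prepend v y) := by
  let T := {t : ((A → A → Prop) × A) × (ℕ → A) //
    IsStrictTotalOrder A t.1.1 ∧ IsLeastWord t.1.1 x t.1.2 t.2}
  have hstep : ∀ t : T, ∃ t' : T, ∃ r, IsWordImage f (sh t'.1.2 1) (sh (sh t.1.2 1) r) := by
    rintro ⟨⟨⟨τ, c⟩, l⟩, h1, h2⟩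
    obtain ⟨σ, hσ, c', l', hl', r, hr⟩ := step f x hfix hM τ h1 c l h2
    exact ⟨⟨⟨⟨σ, c'⟩, l'⟩, hσ, hl'⟩, r, hr⟩
  choose F hF using hstep
  let t : ℕ → T := fun n => F^[n] ⟨⟨⟨ρ, b⟩, lb⟩, hρ, hlb⟩
  have ht : ∀ n, ∃ r, IsWordImage f (sh (t (n+1)).1.2 1) (sh (sh (t n).1.2 1) r) := by
    intro n
    have := hF (t n)
    rwa [show F (t n) = t (n+1) from (Function.iterate_succ_apply' F n _).symm] at this
  have hit : ∀ n k, ∃ r, IsWordImage (fun c => applyIter f k [c]) (sh (t (n+k)).1.2 1)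
      (sh (sh (t n).1.2 1) r) := by
    intro n k
    induction k with
    | zero =>
      refine ⟨0, fun N => ?_⟩
      have : applyMorphism (fun c => applyIter f 0 [c]) (wordPrefix (sh (t (n+0)).1.2 1) N)
        = wordPrefix (sh (t (n+0)).1.2 1) N := by
        simp [applyMorphism, applyIter]
      rw [this]
      unfold IsPrefixOfWord
      rw [wp_length]; rfl
    | succ k ih =>
      obtain ⟨r, hr⟩ := ih
      obtain ⟨q, hq⟩ := ht (n+k)
      have h1 := img_shift _ _ _ hr q
      have h2 := img_comp _ _ _ _ _ hq h1
      rw [← iter_succ] at h2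
      refine ⟨pos (fun c => applyIter f k [c]) (sh (t (n+k)).1.2 1) q + r, ?_⟩
      rw [sh_sh (sh (t n).1.2 1) r] at h2
      exact h2
  obtain ⟨i, j, hij, he⟩ : ∃ i j, i < j ∧ (t (i+1)).1.1 = (t (j+1)).1.1 := by
    obtain ⟨i, j, hne, he⟩ := Finite.exists_ne_map_eq_of_infinite (fun i => (t (i+1)).1.1)
    rcases lt_or_gt_of_ne hne with h | h
    · exact ⟨i, j, h, he⟩
    · exact ⟨j, i, h, he.symm⟩
  have hl : (t (i+1)).1.2 = (t (j+1)).1.2 := by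
    have h1 := (t (i+1)).2
    have h2 := (t (j+1)).2
    rw [← he] at h2
    exact least_unique _ h1.1 _ _ _ _ h1.2 h2.2
  obtain ⟨r, hr⟩ := hit 0 (i+1)
  obtain ⟨q, hq⟩ := hit (i+1) (j-i)
  rw [show i + 1 + (j - i) = j + 1 by omega, ← hl] at hq
  rw [Nat.zero_add] at hr
  exact ⟨(t (i+1)).1.1.1, (t (i+1)).2.1, (t (i+1)).1.1.2, (t (i+1)).1.2, (t (i+1)).2.2,
    _, _, i+1, j-i, by omega, by omega, ⟨_, hr, prep _ r⟩, ⟨_, hq, prep _ q⟩⟩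
end
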